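/- For a random walk started at a ∈ A, the Green's function of A ∪ B satisfies the decomposition G_{A∪B}(a,a') = G_A(a,a') + Σ_{b ∈ B} H_{B∪C}(a,b) · G_{A∪B}(b,a') for every a' ∈ A, where the sum is over the hitting distribution of B∪C restricted to B. -/

import Mathlib

open MeasureTheory ENNReal

/-- The first hitting time of the set `D` along the path `s`, valued in `ℕ∞`
(`⊤` if the path never visits `D`). -/
noncomputable def hitTime {Ω : Type*} (D : Set Ω) (s : ℕ → Ω) : ℕ∞ :=
  ⨅ (k : ℕ) (_ : s k ∈ D), (k : ℕ∞)

/-- The path of the walk started at `x` with steps `ξ` : `S_n = x + ∑_{j<n} ξ j`. -/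
def walk {Ω : Type*} [AddCommGroup Ω] (x : Ω) (ξ : ℕ → Ω) (n : ℕ) : Ω :=
  x + ∑ j ∈ Finset.range n, ξ j

/-- A random walk on a group `Ω`, described by the common law `ν` of its i.i.d.
steps together with the joint law `μ` of the step sequence (characterized on
cylinder sets as the product of `ν`'s). -/
structure RandomWalk (Ω : Type*) [AddCommGroup Ω] [MeasurableSpace Ω] where
  ν : Measure Ω
  probν : IsProbabilityMeasure ν
  μ : Measure (ℕ → Ω)
  probμ : IsProbabilityMeasure μ
  iid : ∀ (n : ℕ) (f : Fin n → Ω),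
    μ {ξ | ∀ i : Fin n, ξ (i : ℕ) = f i} = ∏ i : Fin n, ν {f i}

variable {Ω : Type*} [AddCommGroup Ω] [MeasurableSpace Ω]

/-- `P^x(θ)` : the probability that the path `(S_n)` of the walk started at `x`
has the property `θ`. -/
noncomputable def RandomWalk.P (W : RandomWalk Ω) (x : Ω) (θ : Set (ℕ → Ω)) : ℝ≥0∞ :=
  W.μ {ξ | walk x ξ ∈ θ}

/-- `E^x(T_D)` : the expected hitting time of `D` for the walk started at `x`. -/
noncomputable def RandomWalk.E (W : RandomWalk Ω) (x : Ω) (D : Set Ω) : ℝ≥0∞ :=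
  ∫⁻ ξ, (hitTime D (walk x ξ) : ℝ≥0∞) ∂W.μ

/-- The truncated Green's function `G_D(x,y) = ∑_{j≥0} P^x(S_j = y, j < T_{Dᶜ})`. -/
noncomputable def RandomWalk.G (W : RandomWalk Ω) (D : Set Ω) (x y : Ω) : ℝ≥0∞ :=
  ∑' j : ℕ, W.P x {s | s j = y ∧ (j : ℕ∞) < hitTime Dᶜ s}

/-- The hitting distribution `H_D(x,y) = P^x(S_{T_D} = y)`. -/
noncomputable def RandomWalk.H (W : RandomWalk Ω) (D : Set Ω) (x y : Ω) : ℝ≥0∞ :=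
  W.P x {s | ∃ k : ℕ, hitTime D s = (k : ℕ∞) ∧ s k = y}

/-!
Let `T` be the exit time from `D ⊆ E`. Up to time `T` the walk counts the same visits to `y`
whether it is killed on leaving `D` or on leaving `E`; the `D`-killed walk counts none after `T`,
and the visits of the `E`-killed walk after `T` are those of the path restarted at time `T`.
Taking expectations of this pathwise identity, with the Markov property applied on each event
`{T = k, S_k = b}`, gives `G_E(x,y) = G_D(x,y) + ∑_b H_{Dᶜ}(x,b) G_E(b,y)`. Here only
`b ∈ E \ D` contribute.
-/

open ProbabilityTheory Set

section Path

variable {α : Type*} {D E : Set α} {s : ℕ → α} {k m : ℕ} {y b : α}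

theorem natCast_le_hitTime_iff : (k : ℕ∞) ≤ hitTime D s ↔ ∀ i < k, s i ∉ D := by
  simp only [hitTime, le_iInf_iff, Nat.cast_le]
  exact forall_congr' fun i => by rw [← not_lt, imp_not_comm]

theorem natCast_lt_hitTime_iff : (k : ℕ∞) < hitTime D s ↔ ∀ i ≤ k, s i ∉ D := by
  rw [← ENat.add_one_le_iff (ENat.natCast_ne_top k), ← Nat.cast_one, ← Nat.cast_add,
    natCast_le_hitTime_iff]
  simp only [Nat.lt_succ_iff]

theorem hitTime_eq_natCast_iff : hitTime D s = k ↔ s k ∈ D ∧ ∀ i < k, s i ∉ D := by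
  refine ⟨fun h => ?_, fun ⟨hk, hlt⟩ => (iInf₂_le k hk).antisymm (natCast_le_hitTime_iff.2 hlt)⟩
  have hlt := natCast_le_hitTime_iff.1 h.ge
  refine ⟨by_contra fun hk => ?_, hlt⟩
  exact (natCast_lt_hitTime_iff.2 fun i hi => hi.lt_or_eq.elim (hlt i) (· ▸ hk)).ne h.symm

theorem hitTime_anti (h : D ⊆ E) : hitTime E s ≤ hitTime D s :=
  le_iInf₂ fun i hi => iInf₂_le i (h hi)

/-- The path `s` seen from time `k` onwards. -/
def pathShift (k : ℕ) (s : ℕ → α) : ℕ → α := fun n => s (k + n)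

theorem lt_hitTime_pathShift_iff (h : (k : ℕ∞) ≤ hitTime D s) :
    (m : ℕ∞) < hitTime D (pathShift k s) ↔ ((k + m : ℕ) : ℕ∞) < hitTime D s := by
  rw [natCast_le_hitTime_iff] at h
  simp only [natCast_lt_hitTime_iff, pathShift]
  refine ⟨fun hm i hi => ?_, fun hm i hi => hm _ (by lia)⟩
  rcases lt_or_ge i k with hik | hik
  · exact h i hik
  · simpa only [Nat.add_sub_cancel' hik] using hm (i - k) (by lia)

/-- The times at which a path that is killed on leaving `D` is at `y`. -/
def visitTimes (D : Set α) (y : α) (s : ℕ → α) : Set ℕ :=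
  {j | s j = y ∧ (j : ℕ∞) < hitTime Dᶜ s}

/-- The event `{T_D = k, S_k = y}`. -/
def hitEvent (D : Set α) (k : ℕ) (y : α) : Set (ℕ → α) :=
  {s | hitTime D s = (k : ℕ∞) ∧ s k = y}

theorem dependsOn_mem_visitTimes (D : Set α) (y : α) (j : ℕ) :
    DependsOn (fun s => j ∈ visitTimes D y s) (Iic j) := by
  intro s s' h
  simp only [visitTimes, mem_ofPred_eq, natCast_lt_hitTime_iff, h j self_mem_Iic]
  exact congrArg _ (forall₂_congr fun i hi => by rw [h i hi]).eq

theorem dependsOn_mem_hitEvent (D : Set α) (k : ℕ) (y : α) :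
    DependsOn (· ∈ hitEvent D k y) (Iic k) := by
  intro s s' h
  simp only [hitEvent, mem_ofPred_eq, hitTime_eq_natCast_iff, h k self_mem_Iic]
  exact congrArg (fun p => (s' k ∈ D ∧ p) ∧ s' k = y)
    (forall₂_congr fun i hi => by rw [h i hi.le]).eq

theorem eq_of_mem_hitEvent {l : ℕ} {c : α} (hk : s ∈ hitEvent D k b) (hl : s ∈ hitEvent D l c) :
    k = l :=
  Nat.cast_injective (hk.1.symm.trans hl.1)

theorem visitTimes_eq_empty (h : s 0 ∉ D) : visitTimes D y s = ∅ :=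
  eq_empty_of_forall_notMem fun j hj => natCast_lt_hitTime_iff.1 hj.2 0 j.zero_le h

theorem visitTimes_eq_union (hDE : D ⊆ E) (h : hitTime Dᶜ s = k) :
    visitTimes E y s = visitTimes D y s ∪ (k + ·) '' visitTimes E y (pathShift k s) := by
  have hkE : (k : ℕ∞) ≤ hitTime Eᶜ s := h ▸ hitTime_anti (compl_subset_compl.2 hDE)
  ext j
  rcases lt_or_ge j k with hjk | hkj
  · have hj : (j : ℕ∞) < k := Nat.cast_lt.2 hjk
    have hnot : j ∉ (k + ·) '' visitTimes E y (pathShift k s) := by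
      rintro ⟨m, -, rfl⟩
      lia
    rw [mem_union, or_iff_left hnot]
    simp only [visitTimes, mem_ofPred_eq, h, hj, hj.trans_le hkE]
  · obtain ⟨m, rfl⟩ := Nat.exists_eq_add_of_le hkj
    have hnot : ¬((k + m : ℕ) : ℕ∞) < k := not_lt.2 (Nat.cast_le.2 hkj)
    rw [mem_union, (add_right_injective k).mem_set_image]
    simp only [visitTimes, mem_ofPred_eq, h, hnot, and_false, false_or, pathShift,
      lt_hitTime_pathShift_iff hkE]

theorem encard_visitTimes_eq_add (hDE : D ⊆ E) (h : hitTime Dᶜ s = k) :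
    (visitTimes E y s).encard =
      (visitTimes D y s).encard + (visitTimes E y (pathShift k s)).encard := by
  rw [visitTimes_eq_union hDE h, encard_union_eq, (add_right_injective k).encard_image]
  refine disjoint_left.2 ?_
  rintro _ hj ⟨m, -, rfl⟩
  exact (hj.2.trans_eq h).not_ge (Nat.cast_le.2 (Nat.le_add_right k m))

theorem encard_visitTimes_eq_add_tsum (hDE : D ⊆ E) :
    ((visitTimes E y s).encard : ℝ≥0∞) = (visitTimes D y s).encard +
      ∑' b, ∑' k, (hitEvent Dᶜ k b).indicator
        (fun s => ((visitTimes E y (pathShift k s)).encard : ℝ≥0∞)) s := by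
  rcases eq_or_ne (hitTime Dᶜ s) ⊤ with hD | hD
  · have hE : hitTime Eᶜ s = ⊤ := top_le_iff.1 (hD ▸ hitTime_anti (compl_subset_compl.2 hDE))
    have hmiss (k b) : s ∉ hitEvent Dᶜ k b :=
      fun hs => ENat.natCast_ne_top k (hs.1.symm.trans hD)
    simp only [indicator_of_notMem (hmiss _ _), tsum_zero, add_zero, visitTimes, hD, hE]
  · obtain ⟨k, hk⟩ := ENat.ne_top_iff_exists.1 hD
    have hs : s ∈ hitEvent Dᶜ k (s k) := ⟨hk.symm, rfl⟩
    rw [tsum_eq_single (s k), tsum_eq_single k, indicator_of_mem hs,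
      encard_visitTimes_eq_add hDE hk.symm, ENat.toENNReal_add]
    · exact fun l hl => indicator_of_notMem (fun hl' => hl (eq_of_mem_hitEvent hl' hs)) _
    · refine fun b hb => ENNReal.tsum_eq_zero.2 fun l => indicator_of_notMem (fun hl => hb ?_) _
      exact eq_of_mem_hitEvent hl hs ▸ hl.2.symm

theorem encard_visitTimes_eq_tsum (D : Set α) (y : α) (s : ℕ → α) :
    ((visitTimes D y s).encard : ℝ≥0∞) =
      ∑' j : ℕ, {t | j ∈ visitTimes D y t}.indicator 1 s := by
  rw [← ENNReal.tsum_set_one, tsum_subtype (visitTimes D y s) fun _ => 1]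
  rfl

section Measurability

variable [Countable α] [MeasurableSpace α] [MeasurableSingletonClass α]

theorem measurable_of_dependsOn {ι β : Type*} [MeasurableSpace β] [Nonempty β]
    {f : (ι → α) → β} {I : Set ι} (hI : I.Finite) (hf : DependsOn f I) : Measurable f := by
  have : Finite I := hI
  obtain ⟨g, rfl⟩ := dependsOn_iff_exists_comp.1 hf
  exact (measurable_of_countable g).comp (measurable_pi_lambda _ fun i => measurable_pi_apply _)

theorem measurableSet_of_dependsOn {ι : Type*} {S : Set (ι → α)} {I : Set ι} (hI : I.Finite)
    (hS : DependsOn (· ∈ S) I) : MeasurableSet S :=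
  measurableSet_setOfPred.2 (measurable_of_dependsOn hI hS)

theorem measurableSet_mem_visitTimes (D : Set α) (y : α) (j : ℕ) :
    MeasurableSet {s | j ∈ visitTimes D y s} :=
  measurableSet_of_dependsOn (finite_Iic j) (dependsOn_mem_visitTimes D y j)

theorem measurableSet_hitEvent (D : Set α) (k : ℕ) (b : α) : MeasurableSet (hitEvent D k b) :=
  measurableSet_of_dependsOn (finite_Iic k) (dependsOn_mem_hitEvent D k b)

theorem measurable_encard_visitTimes (D : Set α) (y : α) :
    Measurable fun s => ((visitTimes D y s).encard : ℝ≥0∞) := by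
  simp only [encard_visitTimes_eq_tsum]
  exact .tsum fun j => measurable_one.indicator (measurableSet_mem_visitTimes D y j)

end Measurability

end Path

section Walk

variable {M : Type*} [AddCommGroup M] (x : M)

theorem pathShift_walk (ξ : ℕ → M) (k : ℕ) :
    pathShift k (walk x ξ) = walk (walk x ξ k) (pathShift k ξ) := by
  funext n
  simp only [pathShift, walk, Finset.sum_range_add, add_assoc]

theorem dependsOn_walk (n : ℕ) : DependsOn (fun ξ => walk x ξ n) (Iio n) :=
  fun _ _ h => congrArg (x + ·) (Finset.sum_congr rfl fun i hi => h i (Finset.mem_range.1 hi))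

theorem dependsOn_mem_preimage_walk {k : ℕ} {S : Set (ℕ → M)} (hS : DependsOn (· ∈ S) (Iic k)) :
    DependsOn (· ∈ walk x ⁻¹' S) (Iio k) :=
  fun _ _ h => hS fun i hi => dependsOn_walk x i fun j hj =>
    h j (lt_of_lt_of_le (mem_Iio.1 hj) (mem_Iic.1 hi))

theorem measurable_walk [Countable M] [MeasurableSpace M] [MeasurableSingletonClass M] :
    Measurable (walk x) :=
  measurable_pi_lambda _ fun n => measurable_of_dependsOn (finite_Iio n) (dependsOn_walk x n)

end Walk

theorem indepFun_pi_of_disjoint_range {S ι κ κ' : Type*} {β : ι → Type*} [MeasurableSpace S]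
    {μ : Measure S} [∀ i, MeasurableSpace (β i)] {X : ∀ i, S → β i} (hX : ∀ i, Measurable (X i))
    (hind : iIndepFun X μ) {f : κ → ι} {g : κ' → ι} (hfg : Disjoint (range f) (range g)) :
    IndepFun (fun ω a => X (f a) ω) (fun ω b => X (g b) ω) μ := by
  refine indep_of_indep_of_le_left (indep_of_indep_of_le_right
    (indep_iSup_of_disjoint (fun i => (hX i).comap_le) hind hfg) ?_) ?_ <;>
  · simp only [MeasurableSpace.pi, MeasurableSpace.comap_iSup, MeasurableSpace.comap_comp]
    exact iSup_le fun a => le_iSup₂_of_le _ (mem_range_self a) le_rfl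

namespace RandomWalk

variable (W : RandomWalk Ω)

instance : IsProbabilityMeasure W.ν := W.probν

theorem P_eq_zero {x : Ω} {S : Set (ℕ → Ω)} (h : ∀ ξ, walk x ξ ∉ S) : W.P x S = 0 := by
  rw [P, ← measure_empty (μ := W.μ)]
  exact congrArg _ (eq_empty_of_forall_notMem h)

theorem H_eq_zero {D : Set Ω} {b : Ω} (x : Ω) (hb : b ∉ D) : W.H D x b = 0 :=
  W.P_eq_zero fun _ ⟨_, hk, hkb⟩ => hb (hkb ▸ (hitTime_eq_natCast_iff.1 hk).1)

theorem G_eq_zero {D : Set Ω} {x : Ω} (hx : x ∉ D) (y : Ω) : W.G D x y = 0 := by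
  refine ENNReal.tsum_eq_zero.2 fun j => W.P_eq_zero fun ξ hj => ?_
  have hempty : visitTimes D y (walk x ξ) = ∅ :=
    visitTimes_eq_empty (by simpa [walk] using hx)
  exact hempty.subset hj

variable [Countable Ω] [MeasurableSingletonClass Ω]

theorem map_frestrictLe (n : ℕ) :
    W.μ.map (Preorder.frestrictLe (π := fun _ => Ω) n) = Measure.pi fun _ => W.ν := by
  refine Measure.ext_iff_singleton.2 fun u => ?_
  let ξ : ℕ → Ω := fun i => if hi : i ∈ Finset.Iic n then u ⟨i, hi⟩ else 0
  have hξ (i : Finset.Iic n) : ξ i = u i := dif_pos i.2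
  have hcyl : Preorder.frestrictLe (π := fun _ => Ω) n ⁻¹' {u} =
      {η | ∀ i : Fin (n + 1), η i = ξ i} := by
    ext η
    simp only [mem_preimage, mem_singleton_iff, mem_ofPred_eq, funext_iff, ← hξ,
      Preorder.frestrictLe_apply, Subtype.forall, Finset.mem_Iic, Fin.forall_iff, Nat.lt_succ_iff]
  rw [Measure.map_apply (Preorder.measurable_frestrictLe n) (measurableSet_singleton u), hcyl,
    W.iid, Measure.pi_singleton, Fin.prod_univ_eq_prod_range (fun i => W.ν {ξ i}),
    Nat.range_succ_eq_Iic, ← Finset.prod_coe_sort]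
  simp only [hξ]

theorem μ_eq_infinitePi : W.μ = Measure.infinitePi fun _ => W.ν :=
  ((isProjectiveLimit_nat_iff (isProjectiveMeasureFamily_pi fun _ => W.ν) _).2
    W.map_frestrictLe).unique (Measure.isProjectiveLimit_infinitePi _)

theorem measurePreserving_pathShift (k : ℕ) : MeasurePreserving (pathShift k) W.μ W.μ := by
  refine ⟨measurable_pi_lambda _ fun _ => measurable_pi_apply _, ?_⟩
  rw [μ_eq_infinitePi]
  exact Measure.map_infinitePi_infinitePi_of_inj (add_right_injective k)

theorem indepFun_pathShift (k : ℕ) :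
    IndepFun ((Iio k).domRestrict (π := fun _ => Ω)) (pathShift k) W.μ := by
  rw [μ_eq_infinitePi]
  refine indepFun_pi_of_disjoint_range measurable_pi_apply
    (iIndepFun_infinitePi (X := fun _ => id) fun _ => measurable_id)
    (f := ((↑) : Iio k → ℕ)) (g := (k + ·)) ?_
  rw [Subtype.range_coe]
  refine disjoint_left.2 ?_
  rintro _ hi ⟨n, rfl⟩
  exact (mem_Iio.1 hi).not_ge (Nat.le_add_right k n)

theorem lintegral_mul_comp_pathShift {k : ℕ} {f g : (ℕ → Ω) → ℝ≥0∞}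
    (hf : DependsOn f (Iio k)) (hg : Measurable g) :
    ∫⁻ ξ, f ξ * g (pathShift k ξ) ∂W.μ = (∫⁻ ξ, f ξ ∂W.μ) * ∫⁻ ξ, g ξ ∂W.μ := by
  have hshift := W.measurePreserving_pathShift k
  have hfm : Measurable f := measurable_of_dependsOn (finite_Iio k) hf
  obtain ⟨f', rfl⟩ := dependsOn_iff_exists_comp.1 hf
  have hind := (W.indepFun_pathShift k).comp (measurable_of_countable f') hg
  rw [← hshift.lintegral_comp hg]
  exact lintegral_mul_eq_lintegral_mul_lintegral_of_indepFun hfm (hg.comp hshift.measurable) hind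

/-- The law of the path `(S_n)` of the walk started at `x`, as a measure on path space. -/
noncomputable def pathLaw (x : Ω) : Measure (ℕ → Ω) := W.μ.map (walk x)

theorem P_eq_pathLaw {x : Ω} {S : Set (ℕ → Ω)} (hS : MeasurableSet S) :
    W.P x S = W.pathLaw x S :=
  (Measure.map_apply (measurable_walk x) hS).symm

theorem setLIntegral_comp_pathShift_pathLaw {k : ℕ} {x b : Ω} {S : Set (ℕ → Ω)}
    (hS : DependsOn (· ∈ S) (Iic k)) (hSb : ∀ s ∈ S, s k = b)
    {g : (ℕ → Ω) → ℝ≥0∞} (hg : Measurable g) :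
    ∫⁻ s in S, g (pathShift k s) ∂W.pathLaw x = W.pathLaw x S * ∫⁻ s, g s ∂W.pathLaw b := by
  have hSm : MeasurableSet S := measurableSet_of_dependsOn (finite_Iic k) hS
  have hx := measurable_walk x
  have hb := measurable_walk b
  have hdep : DependsOn ((walk x ⁻¹' S).indicator (1 : (ℕ → Ω) → ℝ≥0∞)) (Iio k) :=
    fun ξ ξ' h => indicator_eq_indicator (dependsOn_mem_preimage_walk x hS h).to_iff rfl
  have restart (ξ : ℕ → Ω) : S.indicator (fun s => g (pathShift k s)) (walk x ξ) =
      (walk x ⁻¹' S).indicator 1 ξ * g (walk b (pathShift k ξ)) := by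
    by_cases hξ : walk x ξ ∈ S
    · rw [indicator_of_mem hξ, indicator_of_mem (by exact hξ), Pi.one_apply, one_mul,
        pathShift_walk, hSb _ hξ]
    · rw [indicator_of_notMem hξ, indicator_of_notMem (by exact hξ), zero_mul]
  calc ∫⁻ s in S, g (pathShift k s) ∂W.pathLaw x
    _ = ∫⁻ ξ, S.indicator (fun s => g (pathShift k s)) (walk x ξ) ∂W.μ := by
        rw [← lintegral_indicator hSm, pathLaw, lintegral_map _ hx]
        exact (hg.comp (W.measurePreserving_pathShift k).measurable).indicator hSm
    _ = ∫⁻ ξ, (walk x ⁻¹' S).indicator 1 ξ * g (walk b (pathShift k ξ)) ∂W.μ :=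
        lintegral_congr restart
    _ = (∫⁻ ξ, (walk x ⁻¹' S).indicator 1 ξ ∂W.μ) * ∫⁻ ξ, g (walk b ξ) ∂W.μ :=
        W.lintegral_mul_comp_pathShift hdep (hg.comp hb)
    _ = W.pathLaw x S * ∫⁻ s, g s ∂W.pathLaw b := by
        rw [lintegral_indicator_one (hx hSm), pathLaw, pathLaw, Measure.map_apply hx hSm,
          lintegral_map hg hb]

theorem G_eq_lintegral_encard_visitTimes (D : Set Ω) (x y : Ω) :
    W.G D x y = ∫⁻ s, (visitTimes D y s).encard ∂W.pathLaw x := by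
  have hmeas := measurableSet_mem_visitTimes D y
  simp only [encard_visitTimes_eq_tsum]
  rw [lintegral_tsum fun j => (measurable_one.indicator (hmeas j)).aemeasurable]
  simp only [lintegral_indicator_one (hmeas _)]
  exact tsum_congr fun j => W.P_eq_pathLaw (hmeas j)

theorem H_eq_tsum_hitEvent (D : Set Ω) (x b : Ω) :
    W.H D x b = ∑' k, W.pathLaw x (hitEvent D k b) := by
  have hunion : {s | ∃ k : ℕ, hitTime D s = k ∧ s k = b} = ⋃ k, hitEvent D k b := ofPred_exists _
  have hmeas (k : ℕ) := measurableSet_hitEvent D k b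
  rw [H, hunion, W.P_eq_pathLaw (.iUnion hmeas), measure_iUnion _ hmeas]
  exact fun k l hkl => disjoint_left.2 fun _ hk hl => hkl (eq_of_mem_hitEvent hk hl)

theorem G_eq_add_tsum {D E : Set Ω} (hDE : D ⊆ E) (x y : Ω) :
    W.G E x y = W.G D x y + ∑' b, W.H Dᶜ x b * W.G E b y := by
  have hN := measurable_encard_visitTimes E y
  have hterm (b : Ω) (k : ℕ) : Measurable ((hitEvent Dᶜ k b).indicator
      fun s => ((visitTimes E y (pathShift k s)).encard : ℝ≥0∞)) :=
    (hN.comp (W.measurePreserving_pathShift k).measurable).indicator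
      (measurableSet_hitEvent Dᶜ k b)
  calc W.G E x y
    _ = ∫⁻ s, (visitTimes E y s).encard ∂W.pathLaw x :=
        W.G_eq_lintegral_encard_visitTimes E x y
    _ = ∫⁻ s, (visitTimes D y s).encard ∂W.pathLaw x + ∑' b, ∑' k,
          ∫⁻ s in hitEvent Dᶜ k b, (visitTimes E y (pathShift k s)).encard ∂W.pathLaw x := by
        rw [lintegral_congr fun s => encard_visitTimes_eq_add_tsum hDE,
          lintegral_add_left (measurable_encard_visitTimes D y),
          lintegral_tsum fun b => (Measurable.tsum (hterm b)).aemeasurable]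
        simp only [lintegral_tsum fun k => (hterm _ k).aemeasurable,
          lintegral_indicator (measurableSet_hitEvent Dᶜ _ _)]
    _ = W.G D x y + ∑' b, ∑' k, W.pathLaw x (hitEvent Dᶜ k b) * W.G E b y := by
        simp only [G_eq_lintegral_encard_visitTimes,
          W.setLIntegral_comp_pathShift_pathLaw (dependsOn_mem_hitEvent Dᶜ _ _)
            (fun _ hs => hs.2) hN]
    _ = W.G D x y + ∑' b, W.H Dᶜ x b * W.G E b y := by
        simp only [ENNReal.tsum_mul_right, H_eq_tsum_hitEvent]

end RandomWalk

theorem green_union_decomposition_general [Countable Ω] [MeasurableSingletonClass Ω]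
    (W : RandomWalk Ω) (A B : Set Ω) (x y : Ω) :
    W.G (A ∪ B) x y = W.G A x y + ∑' b : B, W.H Aᶜ x b * W.G (A ∪ B) b y := by
  rw [W.G_eq_add_tsum subset_union_left,
    tsum_subtype_eq_of_support_subset (f := fun b => W.H Aᶜ x b * W.G (A ∪ B) b y)]
  intro b hb
  have hA : b ∉ A := fun h => left_ne_zero_of_mul hb (W.H_eq_zero x (not_not.2 h))
  have hAB : b ∈ A ∪ B := by_contra fun h => right_ne_zero_of_mul hb (W.G_eq_zero h y)
  exact hAB.resolve_left hA

/-- Decomposition of the Green's function of `A ∪ B` over the first visit to `B`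
before `C`: `G_{A∪B}(a,a') = G_A(a,a') + ∑_{b ∈ B} H_{B∪C}(a,b) G_{A∪B}(b,a')`. -/
theorem green_union_decomposition
    {Ω : Type*} [AddCommGroup Ω] [Countable Ω] [MeasurableSpace Ω]
    [MeasurableSingletonClass Ω] (W : RandomWalk Ω) (A B C : Set Ω)
    (hcover : A ∪ B ∪ C = Set.univ) (hAB : Disjoint A B) (hAC : Disjoint A C)
    (hBC : Disjoint B C) (a a' : Ω) (ha : a ∈ A) (ha' : a' ∈ A) :
    W.G (A ∪ B) a a' =
      W.G A a a' + ∑' b : B, W.H (B ∪ C) a b * W.G (A ∪ B) b a' := by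
  have hcompl : Aᶜ = B ∪ C :=
    IsCompl.compl_eq ⟨hAB.union_right hAC, codisjoint_iff.2 ((sup_assoc A B C).symm.trans hcover)⟩
  exact hcompl ▸ green_union_decomposition_general W A B a a'
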